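/- arXiv:2205.13538 — 3 statements merged into one kernel-verified Lean document; each statement's English description precedes it below -/
import Mathlib

section
/- Let d ≥ 2 be an integer and w ∈ [0,1]^d. Suppose π* ∈ Δ_d attains the supremum of ℐ_w over Δ_d and that there exists an index i ∈ {1,…,d} with w_i·π*_i = 0 (equivalently, |{i : w_i π*_i ≠ 0}| < d). Then sup_{π ∈ Δ_d} ℐ_w(π) ≤ ln(d − 1 + d^{−d}). -/
/-- The standard simplex Δ_d: nonnegative entries summing to 1. -/
def inSimplex {d : ℕ} (p : Fin d → ℝ) : Prop :=
  (∀ i, 0 ≤ p i) ∧ ∑ i, p i = 1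

/-- The output distribution W̄π with W̄_{ij} = w_i δ_{ij} + (1 − w_j)/d. -/
noncomputable def Wbar {d : ℕ} (w p : Fin d → ℝ) (i : Fin d) : ℝ :=
  w i * p i + (∑ j, (1 - w j) * p j) / d

/-- The mutual information ℐ_w(π) = H(W̄π) + ⟨π, w⟩ ln d − ln d, entropy in nats. -/
noncomputable def mutInfo {d : ℕ} (w p : Fin d → ℝ) : ℝ :=
  (∑ i, Real.negMulLog (Wbar w p i)) + (∑ i, p i * w i) * Real.log d - Real.log d

/-!
The Gibbs variational principle bounds `H(q) + ⟨q, f⟩` by `log ∑ᵢ exp fᵢ` for every distribution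
`q`. With `s = ∑ⱼ (1 - wⱼ) πⱼ` the mutual information is `H(W̄π) - s log d`. On a set `T` of indices
where `wᵢ πᵢ = 0` each coordinate of `W̄π` is exactly `s / d`, so the penalty `s log d` is the
linear functional of `W̄π` with weight `c = (d / |T|) log d` on `T` and `0` elsewhere. Taking
`f = -c 𝟙_T` gives the bound `log (d - |T| + |T| d ^ (-d / |T|))`, and `|T| = 1` is the case at
hand.
-/

section Gibbs

variable {ι : Type*} {s t : Finset ι} {q : ι → ℝ}

lemma negMulLog_add_mul_le_exp_sub {y : ℝ} (hy : 0 ≤ y) (x : ℝ) :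
    Real.negMulLog y + y * x ≤ Real.exp x - y := by
  have tilted : Real.negMulLog (y * Real.exp (-x)) ≤ 1 - y * Real.exp (-x) :=
    Real.negMulLog_le_one_sub_self (by positivity)
  have factored : Real.negMulLog (y * Real.exp (-x)) =
      Real.exp (-x) * (Real.negMulLog y + y * x) := by
    rw [Real.negMulLog_mul, Real.negMulLog, Real.negMulLog, Real.log_exp]
    ring
  rw [factored, Real.exp_neg] at tilted
  field_simp at tilted
  exact tilted

theorem sum_negMulLog_add_sum_mul_le_log_sum_exp (hq : ∀ i ∈ s, 0 ≤ q i) (hsum : ∑ i ∈ s, q i = 1)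
    (f : ι → ℝ) :
    ∑ i ∈ s, Real.negMulLog (q i) + ∑ i ∈ s, q i * f i ≤ Real.log (∑ i ∈ s, Real.exp (f i)) := by
  set Z := ∑ i ∈ s, Real.exp (f i) with hZ
  have s_nonempty : s.Nonempty := Finset.nonempty_of_sum_ne_zero (hsum.trans_ne one_ne_zero)
  have Z_pos : 0 < Z := Finset.sum_pos (fun i _ ↦ Real.exp_pos _) s_nonempty
  have normalized : ∑ i ∈ s, Real.exp (f i - Real.log Z) = 1 := by
    simp_rw [Real.exp_sub, Real.exp_log Z_pos]
    rw [← Finset.sum_div, ← hZ, div_self Z_pos.ne']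
  have termwise := Finset.sum_le_sum fun i hi ↦
    negMulLog_add_mul_le_exp_sub (hq i hi) (f i - Real.log Z)
  simp only [mul_sub, Finset.sum_add_distrib, Finset.sum_sub_distrib, ← Finset.sum_mul, hsum,
    normalized] at termwise
  linarith

lemma sum_negMulLog_sub_mul_sum_le_log (hq : ∀ i ∈ s, 0 ≤ q i) (hsum : ∑ i ∈ s, q i = 1)
    (hts : t ⊆ s) (c : ℝ) :
    ∑ i ∈ s, Real.negMulLog (q i) - c * ∑ i ∈ t, q i ≤
      Real.log (s.card - t.card + t.card * Real.exp (-c)) := by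
  classical
  have linear_term : ∑ i ∈ s, q i * (if i ∈ t then -c else 0) = -(c * ∑ i ∈ t, q i) := by
    simp only [mul_ite, mul_zero, Finset.sum_ite_mem, Finset.inter_eq_right.2 hts,
      ← Finset.sum_mul]
    ring
  have partition_function : ∑ i ∈ s, Real.exp (if i ∈ t then -c else 0) =
      s.card - t.card + t.card * Real.exp (-c) := by
    simp [apply_ite Real.exp, Finset.sum_ite, Finset.filter_mem_eq_inter,
      Finset.filter_notMem_eq_sdiff, Finset.inter_eq_right.2 hts, Finset.cast_card_sdiff hts,
      add_comm]
  have gibbs := sum_negMulLog_add_sum_mul_le_log_sum_exp hq hsum fun i ↦ if i ∈ t then -c else 0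
  rwa [linear_term, partition_function, ← sub_eq_add_neg] at gibbs

end Gibbs

/-- The probability `∑ⱼ (1 - wⱼ) πⱼ` of losing when `j` is drawn from `π` and then won with
probability `wⱼ`; it is the mass that `Wbar` spreads uniformly. -/
noncomputable def lossProb {d : ℕ} (w p : Fin d → ℝ) : ℝ :=
  ∑ j, (1 - w j) * p j

section MutInfo

variable {d : ℕ} {w p : Fin d → ℝ}

lemma inSimplex.dim_ne_zero (hp : inSimplex p) : d ≠ 0 := by
  rintro rfl
  simpa using hp.2

lemma lossProb_nonneg (hw : ∀ i, w i ≤ 1) (hp : ∀ i, 0 ≤ p i) : 0 ≤ lossProb w p :=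
  Finset.sum_nonneg fun j _ ↦ mul_nonneg (sub_nonneg.2 (hw j)) (hp j)

lemma sum_mul_eq_one_sub_lossProb (hp : ∑ i, p i = 1) : ∑ i, w i * p i = 1 - lossProb w p := by
  simp only [lossProb, sub_mul, one_mul, Finset.sum_sub_distrib, hp, sub_sub_cancel]

lemma Wbar_eq_lossProb_div {i : Fin d} (hi : w i * p i = 0) : Wbar w p i = lossProb w p / d := by
  rw [Wbar, hi, zero_add, lossProb]

lemma inSimplex_Wbar (hw : ∀ i, w i ∈ Set.Icc (0 : ℝ) 1) (hp : inSimplex p) :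
    inSimplex (Wbar w p) := by
  have loss_nonneg : 0 ≤ lossProb w p := lossProb_nonneg (fun i ↦ (hw i).2) hp.1
  refine ⟨fun i ↦ add_nonneg (mul_nonneg (hw i).1 (hp.1 i))
    (div_nonneg loss_nonneg d.cast_nonneg), ?_⟩
  calc ∑ i, Wbar w p i = ∑ i, w i * p i + d * (lossProb w p / d) := by
        simp [Wbar, lossProb, Finset.sum_add_distrib]
    _ = ∑ i, w i * p i + lossProb w p := by
        rw [mul_div_cancel₀ _ (Nat.cast_ne_zero.2 hp.dim_ne_zero)]
    _ = 1 := by rw [sum_mul_eq_one_sub_lossProb hp.2, sub_add_cancel]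

lemma mutInfo_eq_sum_negMulLog_sub (hp : ∑ i, p i = 1) :
    mutInfo w p = ∑ i, Real.negMulLog (Wbar w p i) - lossProb w p * Real.log d := by
  simp only [mutInfo, mul_comm (p _), sum_mul_eq_one_sub_lossProb hp]
  ring

theorem mutInfo_le_log_of_mul_eq_zero (hw : ∀ i, w i ∈ Set.Icc (0 : ℝ) 1) (hp : inSimplex p)
    {T : Finset (Fin d)} (hT : T.Nonempty) (hzero : ∀ i ∈ T, w i * p i = 0) :
    mutInfo w p ≤ Real.log ((d : ℝ) - T.card + T.card * (d : ℝ) ^ (-((d : ℝ) / T.card))) := by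
  have d_pos : (0 : ℝ) < d := Nat.cast_pos.2 (Nat.pos_of_ne_zero hp.dim_ne_zero)
  have card_ne_zero : (T.card : ℝ) ≠ 0 := Nat.cast_ne_zero.2 hT.card_ne_zero
  set c := (d : ℝ) / T.card * Real.log d with hc
  have penalty : c * ∑ i ∈ T, Wbar w p i = lossProb w p * Real.log d := by
    rw [Finset.sum_congr rfl fun i hi ↦ Wbar_eq_lossProb_div (hzero i hi), Finset.sum_const,
      nsmul_eq_mul, hc]
    field_simp [card_ne_zero]
  have exp_neg_c : Real.exp (-c) = (d : ℝ) ^ (-((d : ℝ) / T.card)) := by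
    rw [Real.rpow_def_of_pos d_pos, hc]
    ring_nf
  obtain ⟨Wbar_nonneg, Wbar_sum⟩ := inSimplex_Wbar hw hp
  have gibbs := sum_negMulLog_sub_mul_sum_le_log (fun i _ ↦ Wbar_nonneg i) Wbar_sum
    T.subset_univ c
  rwa [penalty, exp_neg_c, Finset.card_fin, ← mutInfo_eq_sum_negMulLog_sub hp.2] at gibbs

end MutInfo

theorem stmt1 (d : ℕ) (hd : 2 ≤ d) (w : Fin d → ℝ)
    (hw : ∀ i, w i ∈ Set.Icc (0 : ℝ) 1)
    (pstar : Fin d → ℝ) (hpstar : inSimplex pstar)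
    (hmax : ∀ p : Fin d → ℝ, inSimplex p → mutInfo w p ≤ mutInfo w pstar)
    (hzero : ∃ i, w i * pstar i = 0) :
    sSup {y | ∃ p : Fin d → ℝ, inSimplex p ∧ y = mutInfo w p} ≤
      Real.log ((d : ℝ) - 1 + (d : ℝ) ^ (-(d : ℝ))) := by
  obtain ⟨k, hk⟩ := hzero
  have pstar_le : mutInfo w pstar ≤ Real.log ((d : ℝ) - 1 + (d : ℝ) ^ (-(d : ℝ))) := by
    simpa using mutInfo_le_log_of_mul_eq_zero (T := {k}) hw hpstar (Finset.singleton_nonempty k)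
      (by simpa using hk)
  refine csSup_le ⟨mutInfo w pstar, pstar, hpstar, rfl⟩ ?_
  rintro _ ⟨p, hp, rfl⟩
  exact (hmax p hp).trans pstar_le
end

section
/- Let d ≥ 2 be an integer and w ∈ (0,1]^d with all entries strictly positive. Suppose π* ∈ Δ_d attains the supremum of ℐ_w over Δ_d and π*_i > 0 for all i ∈ {1,…,d}. Then sup_{π ∈ Δ_d} ℐ_w(π) = ℐ*(w) = ln(Σ_{j=1}^d exp[d·w_eff·ln d·(1 − 1/w_j)]), where w_eff = (Σ_{i=1}^d 1/w_i)^{−1}. -/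
/-- The effective winning probability w_eff = (Σ_i 1/w_i)⁻¹. -/
noncomputable def weff {d : ℕ} (w : Fin d → ℝ) : ℝ := (∑ i, (w i)⁻¹)⁻¹

/-- ℐ*(w) = ln(Σ_j exp[d·w_eff·ln d·(1 − 1/w_j)]). -/
noncomputable def Istar {d : ℕ} (w : Fin d → ℝ) : ℝ :=
  Real.log (∑ j, Real.exp ((d : ℝ) * weff w * Real.log d * (1 - (w j)⁻¹)))

/-!
Put `q* i = exp (d * weff w * log d * (1 - 1 / w i) - Istar w)`, a strictly positive probability
vector. The exponent is chosen so that, for every `p` of total mass one,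
`mutInfo w p = Istar w - D(Wbar w p ‖ q*)`, with `D` the relative entropy. Drop the condition
`0 ≤ p` and only ask that the output `Wbar w p` be nonnegative: on this larger convex set
`mutInfo w` is concave, and its maximum is `Istar w`, because the channel is invertible and so `q*`
is the output of some `p`. A maximiser over the simplex with positive entries is a local maximiser
over the larger set, hence by concavity a global one.
-/

open InformationTheory

section RelEntropy

variable {ι : Type*} [Fintype ι] {q r : ι → ℝ}

/-- The relative entropy `D(q ‖ r)` of nonnegative vectors, written through
`klFun x = x log x + 1 - x` so that nonnegativity and convexity can be read off termwise. It is the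
usual `∑ q log (q / r)` when `r` is positive and the total masses agree. -/
noncomputable def relEntropy (q r : ι → ℝ) : ℝ := ∑ i, r i * klFun (q i / r i)

lemma relEntropy_nonneg (hq : 0 ≤ q) (hr : 0 ≤ r) : 0 ≤ relEntropy q r :=
  Finset.sum_nonneg fun i _ ↦ mul_nonneg (hr i) (klFun_nonneg (div_nonneg (hq i) (hr i)))

lemma relEntropy_self (r : ι → ℝ) : relEntropy r r = 0 := by
  refine Finset.sum_eq_zero fun i _ ↦ ?_
  obtain hi | hi := eq_or_ne (r i) 0
  · rw [hi, zero_mul]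
  · rw [div_self hi, klFun_one, mul_zero]

lemma convexOn_relEntropy (hr : 0 ≤ r) : ConvexOn ℝ (Set.Ici 0) (relEntropy · r) := by
  refine ⟨convex_Ici 0, fun x hx y hy a b ha hb hab ↦ ?_⟩
  simp only [relEntropy, smul_eq_mul, Finset.mul_sum, ← Finset.sum_add_distrib]
  refine Finset.sum_le_sum fun i _ ↦ ?_
  have jensen := convexOn_klFun.2 (div_nonneg (hx i) (hr i)) (div_nonneg (hy i) (hr i)) ha hb hab
  calc r i * klFun ((a • x + b • y) i / r i)
      = r i * klFun (a • (x i / r i) + b • (y i / r i)) := by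
        simp only [Pi.add_apply, Pi.smul_apply, smul_eq_mul, add_div, mul_div_assoc]
    _ ≤ r i * (a • klFun (x i / r i) + b • klFun (y i / r i)) :=
        mul_le_mul_of_nonneg_left jensen (hr i)
    _ = a * (r i * klFun (x i / r i)) + b * (r i * klFun (y i / r i)) := by
        simp only [smul_eq_mul]; ring

lemma relEntropy_eq_sum_mul_log_sub_log (hr : ∀ i, r i ≠ 0) (hqr : ∑ i, q i = ∑ i, r i) :
    relEntropy q r = ∑ i, q i * (Real.log (q i) - Real.log (r i)) := by
  have term (i : ι) : r i * klFun (q i / r i)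
      = q i * (Real.log (q i) - Real.log (r i)) + (r i - q i) := by
    obtain hq | hq := eq_or_ne (q i) 0
    · simp [hq, klFun_zero]
    · rw [klFun_apply, Real.log_div hq (hr i)]
      field_simp [hr i]
      ring
  simp only [relEntropy, term, Finset.sum_add_distrib, Finset.sum_sub_distrib, hqr, sub_self,
    add_zero]

end RelEntropy

section Channel

variable {d : ℕ} {w p : Fin d → ℝ}

lemma isLinearMap_Wbar (w : Fin d → ℝ) : IsLinearMap ℝ (Wbar w) where
  map_add p q := by
    ext i
    simp only [Wbar, Pi.add_apply, mul_add, Finset.sum_add_distrib]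
    ring
  map_smul c p := by
    ext i
    simp only [Wbar, Pi.smul_apply, smul_eq_mul, mul_left_comm _ c, ← Finset.mul_sum]
    ring

lemma Wbar_nonneg (hw : ∀ i, 0 ≤ w i ∧ w i ≤ 1) (hp : 0 ≤ p) : 0 ≤ Wbar w p := fun i ↦
  add_nonneg (mul_nonneg (hw i).1 (hp i)) <| div_nonneg
    (Finset.sum_nonneg fun j _ ↦ mul_nonneg (sub_nonneg.2 (hw j).2) (hp j)) d.cast_nonneg

lemma sum_Wbar_mul_inv (hw : ∀ i, w i ≠ 0) (p : Fin d → ℝ) :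
    ∑ i, Wbar w p i * (w i)⁻¹ = ∑ i, p i + (∑ j, (1 - w j) * p j) / d * (weff w)⁻¹ := by
  rw [weff, inv_inv, Finset.mul_sum, ← Finset.sum_add_distrib]
  refine Finset.sum_congr rfl fun i _ ↦ ?_
  rw [Wbar, add_mul, mul_right_comm, mul_inv_cancel₀ (hw i), one_mul]

variable [NeZero d]

lemma sum_Wbar (w p : Fin d → ℝ) : ∑ i, Wbar w p i = ∑ i, p i := by
  have hd : (d : ℝ) ≠ 0 := NeZero.ne _
  have common : ∑ _i : Fin d, (∑ j, (1 - w j) * p j) / d = ∑ j, (1 - w j) * p j := by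
    rw [Finset.sum_const, Finset.card_fin, nsmul_eq_mul, mul_div_cancel₀ _ hd]
  simp only [Wbar, Finset.sum_add_distrib, common]
  rw [← Finset.sum_add_distrib]
  exact Finset.sum_congr rfl fun i _ ↦ by ring

lemma weff_pos (hw : ∀ i, 0 < w i) : 0 < weff w :=
  inv_pos.2 <| Finset.sum_pos (fun i _ ↦ inv_pos.2 (hw i)) Finset.univ_nonempty

lemma Wbar_surjective (hw : ∀ i, 0 < w i) : Function.Surjective (Wbar w) := by
  intro q
  have hd : (d : ℝ) ≠ 0 := NeZero.ne _
  -- The value that the common term `(∑ j, (1 - w j) * p j) / d` must take for a preimage `p`.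
  set c := (∑ i, q i * (w i)⁻¹ - ∑ i, q i) * weff w with hc
  have hcS : c * ∑ i, (w i)⁻¹ = ∑ i, q i * (w i)⁻¹ - ∑ i, q i := by
    rw [hc, ← inv_inv (∑ i, (w i)⁻¹), ← weff, mul_inv_cancel_right₀ (weff_pos hw).ne']
  have common : ∑ j, (1 - w j) * ((q j - c) * (w j)⁻¹) = d * c := by
    calc ∑ j, (1 - w j) * ((q j - c) * (w j)⁻¹)
        = ∑ j, (q j * (w j)⁻¹ - c * (w j)⁻¹ - q j + c) :=
          Finset.sum_congr rfl fun j _ ↦ by field_simp [(hw j).ne']; ring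
      _ = ∑ j, q j * (w j)⁻¹ - c * ∑ j, (w j)⁻¹ - ∑ j, q j + d * c := by
          simp [Finset.sum_add_distrib, Finset.sum_sub_distrib, Finset.mul_sum]
      _ = d * c := by rw [hcS]; ring
  refine ⟨fun i ↦ (q i - c) * (w i)⁻¹, funext fun i ↦ ?_⟩
  rw [Wbar, common, mul_div_cancel_left₀ _ hd, mul_left_comm, mul_inv_cancel₀ (hw i).ne']
  ring

end Channel

section OptimalOutput

variable {d : ℕ} {w p : Fin d → ℝ}

/-- The output distribution at which `mutInfo w` takes the value `Istar w`: the Gibbs weights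
`exp (d * weff w * log d * (1 - (w i)⁻¹))` normalised to total mass one, `Istar w` being the
logarithm of their sum. -/
noncomputable def optimalOutput (w : Fin d → ℝ) (i : Fin d) : ℝ :=
  Real.exp (d * weff w * Real.log d * (1 - (w i)⁻¹) - Istar w)

lemma optimalOutput_pos (w : Fin d → ℝ) (i : Fin d) : 0 < optimalOutput w i := Real.exp_pos _

lemma sum_optimalOutput [NeZero d] (w : Fin d → ℝ) : ∑ i, optimalOutput w i = 1 := by
  have partition_pos : 0 < ∑ j, Real.exp ((d : ℝ) * weff w * Real.log d * (1 - (w j)⁻¹)) :=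
    Finset.sum_pos (fun _ _ ↦ Real.exp_pos _) Finset.univ_nonempty
  simp only [optimalOutput, Real.exp_sub, ← Finset.sum_div]
  rw [Istar, Real.exp_log partition_pos, div_self partition_pos.ne']

lemma sum_Wbar_mul_log_optimalOutput [NeZero d] (hw : ∀ i, 0 < w i) (hp : ∑ i, p i = 1) :
    ∑ i, Wbar w p i * Real.log (optimalOutput w i)
      = (∑ i, p i * w i) * Real.log d - Real.log d - Istar w := by
  have hd : (d : ℝ) ≠ 0 := NeZero.ne _
  have hweff : weff w ≠ 0 := (weff_pos hw).ne'
  have lost : ∑ j, (1 - w j) * p j = 1 - ∑ i, p i * w i := by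
    simp only [sub_mul, one_mul, Finset.sum_sub_distrib, hp, mul_comm (w _)]
  set K := d * weff w * Real.log d with hK
  calc ∑ i, Wbar w p i * Real.log (optimalOutput w i)
      = (K - Istar w) * ∑ i, Wbar w p i - K * ∑ i, Wbar w p i * (w i)⁻¹ := by
        simp only [optimalOutput, Real.log_exp, Finset.mul_sum, ← Finset.sum_sub_distrib]
        exact Finset.sum_congr rfl fun i _ ↦ by ring
    _ = (∑ i, p i * w i) * Real.log d - Real.log d - Istar w := by
        rw [sum_Wbar, sum_Wbar_mul_inv fun i ↦ (hw i).ne', hp, lost, hK]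
        field_simp
        ring

theorem mutInfo_eq_Istar_sub_relEntropy [NeZero d] (hw : ∀ i, 0 < w i) (hp : ∑ i, p i = 1) :
    mutInfo w p = Istar w - relEntropy (Wbar w p) (optimalOutput w) := by
  have same_mass : ∑ i, Wbar w p i = ∑ i, optimalOutput w i := by
    rw [sum_Wbar, hp, sum_optimalOutput]
  rw [relEntropy_eq_sum_mul_log_sub_log (fun i ↦ (optimalOutput_pos w i).ne') same_mass, mutInfo]
  simp only [mul_sub, Finset.sum_sub_distrib, Real.negMulLog, neg_mul, Finset.sum_neg_distrib]
  rw [sum_Wbar_mul_log_optimalOutput hw hp]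
  ring

end OptimalOutput

section SignedInputs

variable {d : ℕ} {w p : Fin d → ℝ}

/-- The signed input vectors of total mass one whose output under the channel is still nonnegative:
the enlargement of the simplex on which the maximum of `mutInfo w` is always `Istar w`. -/
def signedInputs (w : Fin d → ℝ) : Set (Fin d → ℝ) := {p | ∑ i, p i = 1 ∧ 0 ≤ Wbar w p}

lemma inSimplex.mem_signedInputs (hp : inSimplex p) (hw : ∀ i, 0 ≤ w i ∧ w i ≤ 1) :
    p ∈ signedInputs w :=
  ⟨hp.2, Wbar_nonneg hw hp.1⟩

lemma convex_signedInputs (w : Fin d → ℝ) : Convex ℝ (signedInputs w) := by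
  have sum_linear : IsLinearMap ℝ fun p : Fin d → ℝ ↦ ∑ i, p i :=
    ⟨fun p q ↦ Finset.sum_add_distrib, fun c p ↦ (Finset.mul_sum ..).symm⟩
  exact (convex_hyperplane sum_linear 1).inter
    ((convex_Ici 0).is_linear_preimage (isLinearMap_Wbar w))

lemma isLocalMaxOn_signedInputs {f : (Fin d → ℝ) → ℝ} (hp : ∀ i, 0 < p i)
    (hmax : IsLocalMaxOn f {p | inSimplex p} p) : IsLocalMaxOn f (signedInputs w) p := by
  refine hmax.filter_mono (nhdsWithin_le_iff.2 ?_)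
  have pos_near : ∀ᶠ q in nhds p, ∀ i, 0 < q i :=
    Filter.eventually_all.2 fun i ↦ (continuous_apply i).continuousAt.eventually_const_lt (hp i)
  filter_upwards [self_mem_nhdsWithin, nhdsWithin_le_nhds pos_near] with q hq hpos
  exact ⟨fun i ↦ (hpos i).le, hq.1⟩

variable [NeZero d]

lemma concaveOn_mutInfo_signedInputs (hw : ∀ i, 0 < w i) :
    ConcaveOn ℝ (signedInputs w) (mutInfo w) := by
  have relEntropy_convex : ConvexOn ℝ (signedInputs w)
      fun p ↦ relEntropy (Wbar w p) (optimalOutput w) :=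
    ((convexOn_relEntropy fun i ↦ (optimalOutput_pos w i).le).comp_linearMap
      ((isLinearMap_Wbar w).mk' _)).subset (fun _ hp ↦ hp.2) (convex_signedInputs w)
  exact ((concaveOn_const (Istar w) (convex_signedInputs w)).sub relEntropy_convex).congr
    fun p hp ↦ (mutInfo_eq_Istar_sub_relEntropy hw hp.1).symm

theorem isGreatest_mutInfo_signedInputs (hw : ∀ i, 0 < w i) :
    IsGreatest (mutInfo w '' signedInputs w) (Istar w) := by
  have output_nonneg : 0 ≤ optimalOutput w := fun i ↦ (optimalOutput_pos w i).le
  constructor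
  · obtain ⟨p, hp⟩ := Wbar_surjective hw (optimalOutput w)
    have hsum : ∑ i, p i = 1 := by rw [← sum_Wbar w, hp, sum_optimalOutput]
    refine ⟨p, ⟨hsum, hp ▸ output_nonneg⟩, ?_⟩
    rw [mutInfo_eq_Istar_sub_relEntropy hw hsum, hp, relEntropy_self, sub_zero]
  · rintro _ ⟨p, hp, rfl⟩
    rw [mutInfo_eq_Istar_sub_relEntropy hw hp.1]
    exact sub_le_self _ (relEntropy_nonneg hp.2 output_nonneg)

end SignedInputs

theorem stmt2_general {d : ℕ} [NeZero d] {w : Fin d → ℝ} (hw : ∀ i, 0 < w i ∧ w i ≤ 1)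
    {pstar : Fin d → ℝ} (hpstar : inSimplex pstar)
    (hmax : IsLocalMaxOn (mutInfo w) {p | inSimplex p} pstar) (hpos : ∀ i, 0 < pstar i) :
    IsGreatest {y | ∃ p : Fin d → ℝ, inSimplex p ∧ y = mutInfo w p} (Istar w) := by
  have simplex_subset {p : Fin d → ℝ} (hp : inSimplex p) : p ∈ signedInputs w :=
    hp.mem_signedInputs fun i ↦ ⟨(hw i).1.le, (hw i).2⟩
  obtain ⟨⟨popt, hpopt, popt_value⟩, upper⟩ := isGreatest_mutInfo_signedInputs fun i ↦ (hw i).1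
  have pstar_max : IsMaxOn (mutInfo w) (signedInputs w) pstar :=
    .of_isLocalMaxOn_of_concaveOn (simplex_subset hpstar) (isLocalMaxOn_signedInputs hpos hmax)
      (concaveOn_mutInfo_signedInputs fun i ↦ (hw i).1)
  refine ⟨⟨pstar, hpstar, ?_⟩, ?_⟩
  · exact le_antisymm (popt_value ▸ pstar_max hpopt)
      (upper (Set.mem_image_of_mem _ (simplex_subset hpstar)))
  · rintro _ ⟨p, hp, rfl⟩
    exact upper (Set.mem_image_of_mem _ (simplex_subset hp))

theorem stmt2 (d : ℕ) (hd : 2 ≤ d) (w : Fin d → ℝ)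
    (hw : ∀ i, 0 < w i ∧ w i ≤ 1)
    (pstar : Fin d → ℝ) (hpstar : inSimplex pstar)
    (hmax : ∀ p : Fin d → ℝ, inSimplex p → mutInfo w p ≤ mutInfo w pstar)
    (hpos : ∀ i, 0 < pstar i) :
    sSup {y | ∃ p : Fin d → ℝ, inSimplex p ∧ y = mutInfo w p} = Istar w := by
  have : NeZero d := ⟨by omega⟩
  exact (stmt2_general hw hpstar (isMaxOn_iff.2 hmax).localize hpos).csSup_eq
end

section
/- For all x, y ∈ ℝ with x, y ≥ 0, the modified binary entropy satisfies |h̄(x) − h̄(y)| ≤ h̄(|x − y|). In particular, h̄ is an h̄-Lipschitz-like function on ℝ₊. -/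
/-- The modified binary entropy h̄ (in nats), with 0·ln 0 := 0. -/
noncomputable def hbar (x : ℝ) : ℝ :=
  if x ≤ 1 / 2 then Real.negMulLog x + Real.negMulLog (1 - x) else Real.log 2

/-!
The modified binary entropy is the binary entropy precomposed with the truncation
`x ↦ min x (1/2)`. The truncation is concave and the binary entropy is concave and increasing on
`[0, 1/2]`, so `hbar` is concave and increasing on `[0, ∞)`. As `hbar 0 = 0`, concavity makes it
subadditive, and for `x ≤ y` subadditivity gives `hbar y ≤ hbar x + hbar (y - x)`.
-/

open Set

section Concave

variable {𝕜 β : Type*} [AddCommMonoid β] [PartialOrder β] [IsOrderedAddMonoid β]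

theorem smul_le_map_smul_of_concaveOn {E : Type*} [Ring 𝕜] [PartialOrder 𝕜] [IsOrderedAddMonoid 𝕜]
    [AddCommMonoid E] [Module 𝕜 E] [Module 𝕜 β] [PosSMulMono 𝕜 β]
    {s : Set E} {f : E → β} (hf : ConcaveOn 𝕜 s f)
    (h0s : 0 ∈ s) (hf0 : 0 ≤ f 0) {x : E} (hx : x ∈ s) {t : 𝕜} (ht0 : 0 ≤ t) (ht1 : t ≤ 1) :
    t • f x ≤ f (t • x) :=
  calc t • f x ≤ t • f x + (1 - t) • f 0 :=
        le_add_of_nonneg_right (smul_nonneg (sub_nonneg.2 ht1) hf0)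
    _ ≤ f (t • x + (1 - t) • 0) := hf.2 hx h0s ht0 (sub_nonneg.2 ht1) (add_sub_cancel _ _)
    _ = f (t • x) := by rw [smul_zero, add_zero]

theorem map_add_le_add_of_concaveOn [Field 𝕜] [LinearOrder 𝕜] [IsStrictOrderedRing 𝕜]
    [Module 𝕜 β] [PosSMulMono 𝕜 β] {s : Set 𝕜} {f : 𝕜 → β} (hf : ConcaveOn 𝕜 s f)
    (h0s : 0 ∈ s) (hf0 : 0 ≤ f 0) {a b : 𝕜} (ha : 0 ≤ a) (hb : 0 ≤ b) (hab : a + b ∈ s) :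
    f (a + b) ≤ f a + f b := by
  rcases (add_nonneg ha hb).eq_or_lt with hsum | hsum
  · obtain ⟨rfl, rfl⟩ := (add_eq_zero_iff_of_nonneg ha hb).1 hsum.symm
    simpa only [add_zero] using le_add_of_nonneg_right hf0
  have scaled_le {c : 𝕜} (hc0 : 0 ≤ c) (hc : c ≤ a + b) : (c / (a + b)) • f (a + b) ≤ f c := by
    simpa only [smul_eq_mul, div_mul_cancel₀ c hsum.ne'] using
      smul_le_map_smul_of_concaveOn hf h0s hf0 hab (div_nonneg hc0 hsum.le)
        ((div_le_one hsum).2 hc)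
  calc f (a + b) = (a / (a + b)) • f (a + b) + (b / (a + b)) • f (a + b) := by
        rw [← add_smul, ← add_div, div_self hsum.ne', one_smul]
    _ ≤ f a + f b :=
        add_le_add (scaled_le ha (le_add_of_nonneg_right hb))
          (scaled_le hb (le_add_of_nonneg_left ha))

end Concave

theorem image_min_right_Ici {α : Type*} [LinearOrder α] {a c : α} (hac : a ≤ c) :
    (fun x ↦ min x c) '' Ici a = Icc a c := by
  ext y
  constructor
  · rintro ⟨x, hx, rfl⟩
    exact ⟨le_min hx hac, min_le_right _ _⟩
  · rintro ⟨hay, hyc⟩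
    exact ⟨y, hay, min_eq_left hyc⟩

theorem monotoneOn_comp_min_right {α β : Type*} [LinearOrder α] [Preorder β] {f : α → β} {a c : α}
    (hac : a ≤ c) (hf : MonotoneOn f (Icc a c)) : MonotoneOn (fun x ↦ f (min x c)) (Ici a) :=
  fun _ hx _ hy hxy ↦ hf ⟨le_min hx hac, min_le_right _ _⟩ ⟨le_min hy hac, min_le_right _ _⟩
    (min_le_min_right c hxy)

theorem concaveOn_comp_min_right {𝕜 β : Type*} [Semiring 𝕜] [LinearOrder 𝕜] [IsStrictOrderedRing 𝕜]
    [AddCommMonoid β] [PartialOrder β] [SMul 𝕜 β] {f : 𝕜 → β} {a c : 𝕜} (hac : a ≤ c)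
    (hf : ConcaveOn 𝕜 (Icc a c) f) (hf_mono : MonotoneOn f (Icc a c)) :
    ConcaveOn 𝕜 (Ici a) fun x ↦ f (min x c) := by
  have min_concave : ConcaveOn 𝕜 (Ici a) fun x ↦ min x c :=
    (concaveOn_id (convex_Ici a)).inf (concaveOn_const c (convex_Ici a))
  rw [← image_min_right_Ici hac] at hf hf_mono
  exact hf.comp min_concave hf_mono

theorem abs_map_sub_map_le_map_abs_sub {α β : Type*}
    [AddCommGroup α] [LinearOrder α] [IsOrderedAddMonoid α]
    [AddCommGroup β] [LinearOrder β] [IsOrderedAddMonoid β]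
    {f : α → β} (hf : MonotoneOn f (Ici 0))
    (hf_add : ∀ a b, 0 ≤ a → 0 ≤ b → f (a + b) ≤ f a + f b) {x y : α} (hx : 0 ≤ x) (hy : 0 ≤ y) :
    |f x - f y| ≤ f |x - y| := by
  wlog hyx : y ≤ x generalizing x y
  · rw [abs_sub_comm, abs_sub_comm x]
    exact this hy hx (le_of_not_ge hyx)
  rw [abs_of_nonneg (sub_nonneg.2 (hf hy hx hyx)), abs_of_nonneg (sub_nonneg.2 hyx),
    sub_le_iff_le_add']
  simpa only [add_sub_cancel] using hf_add y (x - y) hy (sub_nonneg.2 hyx)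

theorem hbar_eq_binEntropy_min (x : ℝ) : hbar x = Real.binEntropy (min x 2⁻¹) := by
  rw [hbar, one_div]
  split_ifs with hx
  · rw [min_eq_left hx, Real.binEntropy_eq_negMulLog_add_negMulLog_one_sub]
  · rw [min_eq_right (le_of_not_ge hx), Real.binEntropy_two_inv]

theorem hbar_zero : hbar 0 = 0 := by
  simp [hbar]

theorem monotoneOn_hbar : MonotoneOn hbar (Ici 0) := by
  rw [funext hbar_eq_binEntropy_min]
  exact monotoneOn_comp_min_right (by norm_num) Real.binEntropy_strictMonoOn.monotoneOn

theorem concaveOn_hbar : ConcaveOn ℝ (Ici 0) hbar := by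
  have binEntropy_concave : ConcaveOn ℝ (Icc 0 2⁻¹) Real.binEntropy :=
    Real.strictConcave_binEntropy.concaveOn.subset (Icc_subset_Icc_right (by norm_num))
      (convex_Icc 0 2⁻¹)
  rw [funext hbar_eq_binEntropy_min]
  exact concaveOn_comp_min_right (by norm_num) binEntropy_concave
    Real.binEntropy_strictMonoOn.monotoneOn

theorem hbar_add_le {a b : ℝ} (ha : 0 ≤ a) (hb : 0 ≤ b) : hbar (a + b) ≤ hbar a + hbar b :=
  map_add_le_add_of_concaveOn concaveOn_hbar self_mem_Ici hbar_zero.ge ha hb (add_nonneg ha hb)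

theorem stmt6 (x y : ℝ) (hx : 0 ≤ x) (hy : 0 ≤ y) :
    |hbar x - hbar y| ≤ hbar |x - y| :=
  abs_map_sub_map_le_map_abs_sub monotoneOn_hbar (fun _ _ ↦ hbar_add_le) hx hy
end
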